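/- Let M and N be real symmetric 2×2 matrices with det M < 0 (so M has signature (1,1)), let Ω = iM + N with (1,1)-entry ω₁₁, and let c₁, c₂ ∈ ℝ² with c₁ᵀMc₁ < 0 and c₂ᵀMc₂ < 0 lie in the same connected component of the cone {c ∈ ℝ² : cᵀMc < 0}. Let p₁ ∈ ℝ and σ ∈ ℝ with σ > 1/2. Then ∫₀^∞ Σ_{n∈ℤ} |ρ_M^{c₁,c₂}((n√t, 0)ᵀ) · e(½ω₁₁n²t + p₁n)| · t^{σ-1} dt < ∞. -/

import Mathlib

open Matrix

/-- `e(z) := exp(2πiz)`. -/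
noncomputable def ec (z : ℂ) : ℂ := Complex.exp (2 * (Real.pi : ℂ) * Complex.I * z)

/-- `E(z) := ∫₀^z e^{-πu²} du`, realised as `∫₀¹ z·exp(-π t² z²) dt`. -/
noncomputable def E (z : ℂ) : ℂ :=
  ∫ t in (0 : ℝ)..1, z * Complex.exp (-(Real.pi : ℂ) * (t : ℂ) ^ 2 * z ^ 2)

/-- `ρ_M^c(v) := E(cᵀMv / √(-½cᵀMc))` for a real symmetric 2×2 matrix `M`,
`c ∈ ℝ²` with `cᵀMc < 0`, and `v ∈ ℂ²`. -/
noncomputable def rho (M : Matrix (Fin 2) (Fin 2) ℝ) (c : Fin 2 → ℝ) (v : Fin 2 → ℂ) : ℂ :=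
  E (((fun i => (c i : ℂ)) ⬝ᵥ (M.map Complex.ofReal).mulVec v) /
      (Real.sqrt (-(1 / 2) * (c ⬝ᵥ M.mulVec c)) : ℂ))

/-!
Along a ray `x • v` the function `ρ_M^{c₁,c₂}` is the difference `E (b x) - E (a x)`, which is
`O(|x| exp (-π K x²))` as soon as `K ≤ s²` for all `s` between `a` and `b`, whereas `|e(½ω x²)|` is
`exp (-π Im ω x²)` with `Im ω = vᵀMv`. So everything rests on the positivity of `vᵀMv + s²`
between `a` and `b`. Each `c` in the negative cone gives a positive majorant
`vᵀMv + 2 (cᵀMv)² / (-cᵀMc)` of `M`, and when `c` moves inside one component, connectedness makes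
its second summand take the value `s²` for every `s` between `a` and `b`. What is left is the
Mellin transform of `∑ₙ |n| √t exp (-π δ n² t)`, a multiple of `∑ₙ |n|^{-2σ}`.
-/

open MeasureTheory Set

lemma lintegral_rpow_mul_exp_neg_mul_Ioi {s r : ℝ} (hs : 0 < s) (hr : 0 < r) :
    ∫⁻ t in Ioi (0 : ℝ), ENNReal.ofReal (t ^ (s - 1) * Real.exp (-(r * t))) =
      ENNReal.ofReal ((1 / r) ^ s * Real.Gamma s) := by
  have hint : IntegrableOn (fun t : ℝ => t ^ (s - 1) * Real.exp (-(r * t))) (Ioi 0) := by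
    simpa only [Real.rpow_one, neg_mul] using
      integrableOn_rpow_mul_exp_neg_mul_rpow (p := 1) (s := s - 1) (by linarith) one_pos hr
  rw [← Real.integral_rpow_mul_exp_neg_mul_Ioi hs hr, ofReal_integral_eq_lintegral_ofReal hint]
  filter_upwards [ae_restrict_mem measurableSet_Ioi] with t ht
  have ht₀ : 0 < t := ht
  positivity

lemma lintegral_tsum_mul_rpow_mul_exp_lt_top {ι : Type*} [Countable ι] {a r : ι → ℝ} {s : ℝ}
    (hs : 0 < s) (ha : ∀ i, 0 ≤ a i) (har : ∀ i, a i = 0 ∨ 0 < r i)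
    (hsum : Summable fun i => a i / r i ^ s) :
    ∫⁻ t in Ioi (0 : ℝ), ∑' i, ENNReal.ofReal (a i * (t ^ (s - 1) * Real.exp (-(r i * t)))) <
      ⊤ := by
  have hterm (i : ι) :
      ∫⁻ t in Ioi (0 : ℝ), ENNReal.ofReal (a i * (t ^ (s - 1) * Real.exp (-(r i * t)))) =
        ENNReal.ofReal (Real.Gamma s * (a i / r i ^ s)) := by
    rcases har i with hi | hi
    · simp [hi]
    simp_rw [ENNReal.ofReal_mul (ha i)]
    rw [lintegral_const_mul' _ _ ENNReal.ofReal_ne_top, lintegral_rpow_mul_exp_neg_mul_Ioi hs hi,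
      ← ENNReal.ofReal_mul (ha i), Real.div_rpow zero_le_one hi.le, Real.one_rpow]
    ring_nf
  rw [lintegral_tsum fun i => by fun_prop]
  simp_rw [hterm]
  exact (hsum.mul_left _).tsum_ofReal_lt_top

lemma summable_abs_int_div_mul_sq_rpow {r s : ℝ} (hr : 0 < r) (hs : 1 < s) :
    Summable fun n : ℤ => |(n : ℝ)| / (r * (n : ℝ) ^ 2) ^ s := by
  refine ((Real.summable_abs_int_rpow (b := 2 * s - 1) (by linarith)).mul_left
    (1 / r ^ s)).congr fun n => ?_
  rcases eq_or_ne n 0 with rfl | hn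
  · simp [Real.zero_rpow (by linarith : 1 - 2 * s ≠ 0)]
  have habs : 0 < |(n : ℝ)| := by positivity
  rw [← sq_abs (n : ℝ), Real.mul_rpow hr.le (by positivity), ← Real.rpow_natCast_mul habs.le,
    show -(2 * s - 1) = 1 - (2 : ℕ) * s by push_cast; ring, Real.rpow_sub habs, Real.rpow_one]
  ring

lemma E_ofReal (x : ℝ) :
    E x = ((∫ u in (0 : ℝ)..x, Real.exp (-Real.pi * u ^ 2) : ℝ) : ℂ) := by
  have hscale := intervalIntegral.mul_integral_comp_mul_left (a := 0) (b := 1) (c := x)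
    (f := fun u => Real.exp (-Real.pi * u ^ 2))
  rw [mul_zero, mul_one] at hscale
  rw [← hscale, E, intervalIntegral.integral_const_mul, Complex.ofReal_mul,
    ← intervalIntegral.integral_ofReal]
  congr 2
  ext t
  push_cast
  ring_nf

lemma E_sub_E_ofReal (a b x : ℝ) :
    E ↑(b * x) - E ↑(a * x) =
      ((x * ∫ s in a..b, Real.exp (-Real.pi * (s * x) ^ 2) : ℝ) : ℂ) := by
  have hint (y z : ℝ) :
      IntervalIntegrable (fun u : ℝ => Real.exp (-Real.pi * u ^ 2)) volume y z :=
    (by fun_prop : Continuous fun u : ℝ => Real.exp (-Real.pi * u ^ 2)).intervalIntegrable y z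
  rw [E_ofReal, E_ofReal, ← Complex.ofReal_sub,
    intervalIntegral.integral_interval_sub_left (hint _ _) (hint _ _),
    ← intervalIntegral.mul_integral_comp_mul_right (f := fun u => Real.exp (-Real.pi * u ^ 2))]

lemma norm_E_sub_E_ofReal_le {a b K : ℝ} (hK : ∀ s ∈ uIcc a b, K ≤ s ^ 2) (x : ℝ) :
    ‖E ↑(b * x) - E ↑(a * x)‖ ≤ |b - a| * |x| * Real.exp (-Real.pi * (K * x ^ 2)) := by
  have hintegral : ‖∫ s in a..b, Real.exp (-Real.pi * (s * x) ^ 2)‖ ≤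
      Real.exp (-Real.pi * (K * x ^ 2)) * |b - a| := by
    refine intervalIntegral.norm_integral_le_of_norm_le_const fun s hs => ?_
    have hKs : K * x ^ 2 ≤ (s * x) ^ 2 := by
      rw [mul_pow]
      exact mul_le_mul_of_nonneg_right (hK s (uIoc_subset_uIcc hs)) (sq_nonneg x)
    rw [Real.norm_eq_abs, Real.abs_exp, Real.exp_le_exp]
    exact mul_le_mul_of_nonpos_left hKs (neg_nonpos.2 Real.pi_pos.le)
  rw [E_sub_E_ofReal, Complex.norm_real, norm_mul, Real.norm_eq_abs x]
  calc |x| * ‖∫ s in a..b, Real.exp (-Real.pi * (s * x) ^ 2)‖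
      ≤ |x| * (Real.exp (-Real.pi * (K * x ^ 2)) * |b - a|) := by gcongr
    _ = |b - a| * |x| * Real.exp (-Real.pi * (K * x ^ 2)) := by ring

lemma norm_ec (z : ℂ) : ‖ec z‖ = Real.exp (-2 * Real.pi * z.im) := by
  rw [ec, Complex.norm_exp]
  simp

lemma norm_ec_quadratic (ω : ℂ) (p t : ℝ) (n : ℤ) :
    ‖ec ((1 / 2) * ω * (n : ℂ) ^ 2 * (t : ℂ) + (p : ℂ) * (n : ℂ))‖ =
      Real.exp (-Real.pi * (ω.im * ((n : ℝ) ^ 2 * t))) := by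
  have hsplit : (1 / 2) * ω * (n : ℂ) ^ 2 * (t : ℂ) + (p : ℂ) * (n : ℂ) =
      ((1 / 2 * ((n : ℝ) ^ 2 * t) : ℝ) : ℂ) * ω + ((p * n : ℝ) : ℂ) := by
    push_cast
    ring
  rw [norm_ec, hsplit, Complex.add_im, Complex.im_ofReal_mul, Complex.ofReal_im]
  ring_nf

lemma norm_E_sub_E_mul_ec_le {a b δ t : ℝ} {ω : ℂ} (hδ : ∀ s ∈ uIcc a b, δ ≤ ω.im + s ^ 2)
    (ht : 0 ≤ t) (p : ℝ) (n : ℤ) :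
    ‖(E ↑(b * (n * √t)) - E ↑(a * (n * √t))) *
        ec ((1 / 2) * ω * (n : ℂ) ^ 2 * (t : ℂ) + (p : ℂ) * (n : ℂ))‖ ≤
      |b - a| * |(n : ℝ)| * (√t * Real.exp (-(Real.pi * δ * (n : ℝ) ^ 2 * t))) := by
  have hE := norm_E_sub_E_ofReal_le (K := δ - ω.im) (fun s hs => by linarith [hδ s hs]) (n * √t)
  rw [mul_pow, Real.sq_sqrt ht, abs_mul, abs_of_nonneg (Real.sqrt_nonneg t)] at hE
  rw [norm_mul, norm_ec_quadratic]
  calc ‖E ↑(b * (n * √t)) - E ↑(a * (n * √t))‖ *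
        Real.exp (-Real.pi * (ω.im * ((n : ℝ) ^ 2 * t)))
      ≤ |b - a| * (|(n : ℝ)| * √t) * Real.exp (-Real.pi * ((δ - ω.im) * ((n : ℝ) ^ 2 * t))) *
          Real.exp (-Real.pi * (ω.im * ((n : ℝ) ^ 2 * t))) := by gcongr
    _ = |b - a| * |(n : ℝ)| * (√t * Real.exp (-(Real.pi * δ * (n : ℝ) ^ 2 * t))) := by
      rw [mul_assoc _ (Real.exp _), ← Real.exp_add]
      ring_nf

lemma lintegral_tsum_norm_E_sub_E_mul_ec_lt_top {a b σ : ℝ} {ω : ℂ}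
    (hω : ∀ s ∈ uIcc a b, 0 < ω.im + s ^ 2) (p : ℝ) (hσ : 1 / 2 < σ) :
    ∫⁻ t in Ioi (0 : ℝ),
        (∑' n : ℤ, ENNReal.ofReal ‖(E ↑(b * (n * √t)) - E ↑(a * (n * √t))) *
            ec ((1 / 2) * ω * (n : ℂ) ^ 2 * (t : ℂ) + (p : ℂ) * (n : ℂ))‖) *
          ENNReal.ofReal (t ^ (σ - 1)) < ⊤ := by
  obtain ⟨δ, hδ, hδω⟩ := isCompact_uIcc.exists_forall_le' (by fun_prop) hω
  have hmellin := lintegral_tsum_mul_rpow_mul_exp_lt_top (s := σ + 1 / 2)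
    (a := fun n : ℤ => |b - a| * |(n : ℝ)|) (r := fun n : ℤ => Real.pi * δ * (n : ℝ) ^ 2)
    (by linarith) (fun n => by positivity)
    (fun n => by
      rcases eq_or_ne n 0 with rfl | hn
      · simp
      · exact .inr (by positivity))
    (by
      simpa only [mul_div_assoc] using
        (summable_abs_int_div_mul_sq_rpow (by positivity) (by linarith)).mul_left (|b - a|))
  refine (setLIntegral_mono' measurableSet_Ioi fun t ht => ?_).trans_lt hmellin
  have ht₀ : 0 < t := ht
  have hpow : t ^ (σ + 1 / 2 - 1) = √t * t ^ (σ - 1) := by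
    rw [Real.sqrt_eq_rpow, ← Real.rpow_add ht₀]
    ring_nf
  rw [← ENNReal.tsum_mul_right]
  refine ENNReal.tsum_le_tsum fun n => ?_
  rw [← ENNReal.ofReal_mul (norm_nonneg _), hpow]
  exact ENNReal.ofReal_le_ofReal ((mul_le_mul_of_nonneg_right
    (norm_E_sub_E_mul_ec_le hδω ht₀.le p n) (Real.rpow_nonneg ht₀.le (σ - 1))).trans_eq (by ring))

lemma dotProduct_mulVec_mul_sub_sq_fin_two {R : Type*} [CommRing R] {M : Matrix (Fin 2) (Fin 2) R}
    (hM : M.IsSymm) (c v : Fin 2 → R) :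
    (c ⬝ᵥ M *ᵥ c) * (v ⬝ᵥ M *ᵥ v) - (c ⬝ᵥ M *ᵥ v) ^ 2 =
      M.det * (c 0 * v 1 - c 1 * v 0) ^ 2 := by
  have h : M 0 1 = M 1 0 := hM.apply 1 0
  simp only [dotProduct, mulVec, Fin.sum_univ_two, det_fin_two, h]
  ring

lemma eq_zero_of_orthogonal_of_collinear {R : Type*} [CommRing R] [NoZeroDivisors R]
    {M : Matrix (Fin 2) (Fin 2) R} {c v : Fin 2 → R} (hc : c ⬝ᵥ M *ᵥ c ≠ 0)
    (horth : c ⬝ᵥ M *ᵥ v = 0) (hcol : c 0 * v 1 - c 1 * v 0 = 0) : v = 0 := by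
  have hmul : ∀ i, (c ⬝ᵥ M *ᵥ c) * v i = 0 := by
    simp only [dotProduct, mulVec, Fin.sum_univ_two] at horth ⊢
    refine Fin.forall_fin_two.2 ⟨?_, ?_⟩
    · linear_combination c 0 * horth - (c 0 * M 0 1 + c 1 * M 1 1) * hcol
    · linear_combination c 1 * horth + (c 0 * M 0 0 + c 1 * M 1 0) * hcol
  exact funext fun i => (mul_eq_zero.1 (hmul i)).resolve_left hc

/-- The real number at which `E` is evaluated in `ρ_M^c(v)`, for `v ∈ ℝ²`. -/
noncomputable def rhoArg (M : Matrix (Fin 2) (Fin 2) ℝ) (c v : Fin 2 → ℝ) : ℝ :=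
  (c ⬝ᵥ M *ᵥ v) / √(-(1 / 2) * (c ⬝ᵥ M *ᵥ c))

lemma rho_ofReal_mul (M : Matrix (Fin 2) (Fin 2) ℝ) (c v : Fin 2 → ℝ) (x : ℝ) :
    rho M c (fun i => (x : ℂ) * v i) = E ↑(rhoArg M c v * x) := by
  rw [rho, rhoArg]
  congr 1
  simp only [dotProduct, mulVec, Fin.sum_univ_two, Matrix.map_apply]
  push_cast
  ring

section NegativeCone

variable {M : Matrix (Fin 2) (Fin 2) ℝ} {v : Fin 2 → ℝ}

lemma continuousOn_rhoArg : ContinuousOn (fun c => rhoArg M c v) {c | c ⬝ᵥ M *ᵥ c < 0} := by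
  refine ContinuousOn.div (by fun_prop) (by fun_prop) fun c (hc : c ⬝ᵥ M *ᵥ c < 0) => ?_
  exact (Real.sqrt_pos.2 (by linarith)).ne'

lemma dotProduct_mulVec_add_rhoArg_sq_pos (hM : M.IsSymm) (hdet : M.det < 0) (hv : v ≠ 0)
    {c : Fin 2 → ℝ} (hc : c ⬝ᵥ M *ᵥ c < 0) : 0 < v ⬝ᵥ M *ᵥ v + rhoArg M c v ^ 2 := by
  have hquot : v ⬝ᵥ M *ᵥ v + rhoArg M c v ^ 2 =
      (-M.det * (c 0 * v 1 - c 1 * v 0) ^ 2 + (c ⬝ᵥ M *ᵥ v) ^ 2) / -(c ⬝ᵥ M *ᵥ c) := by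
    have hne := hc.ne
    rw [rhoArg, div_pow, Real.sq_sqrt (by linarith)]
    field_simp
    linear_combination dotProduct_mulVec_mul_sub_sq_fin_two hM c v
  have hdet_pos : 0 < -M.det := neg_pos.2 hdet
  rw [hquot]
  refine div_pos ?_ (neg_pos.2 hc)
  rcases eq_or_ne (c ⬝ᵥ M *ᵥ v) 0 with horth | horth
  · have hindep : c 0 * v 1 - c 1 * v 0 ≠ 0 :=
      fun hdep => hv (eq_zero_of_orthogonal_of_collinear hc.ne horth hdep)
    positivity
  · positivity

lemma dotProduct_mulVec_add_sq_pos_of_mem_uIcc (hM : M.IsSymm) (hdet : M.det < 0) (hv : v ≠ 0)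
    {c₁ c₂ : Fin 2 → ℝ} (hconn : c₂ ∈ connectedComponentIn {c | c ⬝ᵥ M *ᵥ c < 0} c₁) {s : ℝ}
    (hs : s ∈ uIcc (rhoArg M c₁ v) (rhoArg M c₂ v)) : 0 < v ⬝ᵥ M *ᵥ v + s ^ 2 := by
  have hc₁ : c₁ ∈ {c | c ⬝ᵥ M *ᵥ c < 0} := connectedComponentIn_nonempty_iff.1 ⟨c₂, hconn⟩
  have hsub := connectedComponentIn_subset {c | c ⬝ᵥ M *ᵥ c < 0} c₁
  have himage : IsPreconnected
      ((fun c => rhoArg M c v) '' connectedComponentIn {c | c ⬝ᵥ M *ᵥ c < 0} c₁) :=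
    isPreconnected_connectedComponentIn.image _ (continuousOn_rhoArg.mono hsub)
  obtain ⟨c, hc, rfl⟩ := himage.ordConnected.uIcc_subset
    (mem_image_of_mem _ (mem_connectedComponentIn hc₁)) (mem_image_of_mem _ hconn) hs
  exact dotProduct_mulVec_add_rhoArg_sq_pos hM hdet hv (hsub hc)

end NegativeCone

theorem stmt_8_general {M : Matrix (Fin 2) (Fin 2) ℝ} (hM : M.IsSymm) (hdet : M.det < 0)
    {v : Fin 2 → ℝ} (hv : v ≠ 0) {ω : ℂ} (hω : ω.im = v ⬝ᵥ M *ᵥ v)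
    {c₁ c₂ : Fin 2 → ℝ} (hconn : c₂ ∈ connectedComponentIn {c | c ⬝ᵥ M *ᵥ c < 0} c₁)
    (p : ℝ) {σ : ℝ} (hσ : 1 / 2 < σ) :
    ∫⁻ t in Ioi (0 : ℝ),
        (∑' n : ℤ, ENNReal.ofReal
          ‖(rho M c₂ (fun i => (n : ℂ) * (√t : ℂ) * v i) -
              rho M c₁ (fun i => (n : ℂ) * (√t : ℂ) * v i)) *
            ec ((1 / 2) * ω * (n : ℂ) ^ 2 * (t : ℂ) + (p : ℂ) * (n : ℂ))‖) *
          ENNReal.ofReal (t ^ (σ - 1)) < ⊤ := by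
  have hrho (c : Fin 2 → ℝ) (n : ℤ) (t : ℝ) :
      rho M c (fun i => (n : ℂ) * (√t : ℂ) * v i) = E ↑(rhoArg M c v * (n * √t)) := by
    rw [← rho_ofReal_mul]
    push_cast
    rfl
  simp only [hrho]
  refine lintegral_tsum_norm_E_sub_E_mul_ec_lt_top (fun s hs => ?_) p hσ
  rw [hω]
  exact dotProduct_mulVec_add_sq_pos_of_mem_uIcc hM hdet hv hconn hs

/-- **Absolute convergence of the Mellin transform of the `n₂ = 0` part.**
With `M` of signature `(1,1)`, `Ω = iM + N`, `c₁, c₂` in the same connected component of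
the negative cone of `M`, `p₁ ∈ ℝ` and `σ > 1/2`:
`∫₀^∞ Σ_{n∈ℤ} |ρ_M^{c₁,c₂}((n√t, 0)ᵀ)·e(½ω₁₁n²t + p₁n)|·t^{σ-1} dt < ∞`. -/
theorem stmt_8 (M N : Matrix (Fin 2) (Fin 2) ℝ) (hMsymm : M.IsSymm) (hNsymm : N.IsSymm)
    (hdet : M.det < 0)
    (Ω : Matrix (Fin 2) (Fin 2) ℂ)
    (hΩ : Ω = Complex.I • M.map Complex.ofReal + N.map Complex.ofReal)
    (c₁ c₂ : Fin 2 → ℝ) (hc₁ : c₁ ⬝ᵥ M.mulVec c₁ < 0) (hc₂ : c₂ ⬝ᵥ M.mulVec c₂ < 0)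
    (hconn : c₂ ∈ connectedComponentIn {x : Fin 2 → ℝ | x ⬝ᵥ M.mulVec x < 0} c₁)
    (p₁ σ : ℝ) (hσ : 1 / 2 < σ) :
    ∫⁻ t in Set.Ioi (0 : ℝ),
        (∑' n : ℤ, ENNReal.ofReal (norm
            ((rho M c₂ ![(n : ℂ) * (Real.sqrt t : ℂ), 0] -
                rho M c₁ ![(n : ℂ) * (Real.sqrt t : ℂ), 0]) *
              ec ((1 / 2) * Ω 0 0 * (n : ℂ) ^ 2 * (t : ℂ) + (p₁ : ℂ) * (n : ℂ))))) *
          ENNReal.ofReal (t ^ (σ - 1)) < ⊤ := by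
  have haxis (x : ℂ) : ![x, 0] = fun i => x * ((![1, 0] : Fin 2 → ℝ) i : ℂ) := by
    ext i; fin_cases i <;> simp
  simp only [haxis]
  exact stmt_8_general hMsymm hdet (by simp) (by simp [hΩ, vecHead]) hconn p₁ hσ
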